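/- arXiv:1808.10587 — 6 statements merged into one kernel-verified Lean document; each statement's English description precedes it below -/
import Mathlib

section
/- Let (u₀, u₁) and (v₀, v₁) be unit dual vectors with corresponding lines L_u = {u₀ × u₁ + t·u₀ : t ∈ ℝ} and L_v = {v₀ × v₁ + t·v₀ : t ∈ ℝ}. Then the lines L_u and L_v intersect perpendicularly (i.e., L_u ∩ L_v ≠ ∅ and ⟪u₀, v₀⟫ = 0) if and only if ⟪u₀, v₀⟫ = 0 and ⟪u₀, v₁⟫ + ⟪u₁, v₀⟫ = 0 (i.e., the dual inner product of the two unit dual vectors vanishes). -/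
noncomputable section
open scoped RealInnerProductSpace

/-- Euclidean 3-space `ℝ³`. -/
abbrev E3 : Type := EuclideanSpace ℝ (Fin 3)

/-- The cross product on `E3`. -/
def cross (u v : E3) : E3 :=
  (WithLp.equiv 2 (Fin 3 → ℝ)).symm
    ![u 1 * v 2 - u 2 * v 1, u 2 * v 0 - u 0 * v 2, u 0 * v 1 - u 1 * v 0]

/-!
Two non-parallel lines `p + ℝu` and `q + ℝv` of `ℝ³` meet exactly when `q - p` lies in the plane
spanned by `u` and `v`, that is, when `⟪q - p, u × v⟫ = 0`. For `p = u₀ × u₁` and `q = v₀ × v₁` the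
Binet–Cauchy identity evaluates this triple product to minus the dual part of the dual inner
product.
-/

open Matrix Submodule

theorem exists_mem_lines_iff_sub_mem_span_pair {R M : Type*} [Ring R] [AddCommGroup M] [Module R M]
    {p q u v : M} :
    (∃ x, (∃ t : R, x = p + t • u) ∧ ∃ t : R, x = q + t • v) ↔ q - p ∈ span R {u, v} := by
  rw [mem_span_pair]
  constructor
  · rintro ⟨_, ⟨t, rfl⟩, s, h⟩
    exact ⟨t, -s, by rw [neg_smul, ← sub_eq_add_neg, sub_eq_sub_iff_add_eq_add, add_comm, h]⟩
  · rintro ⟨t, s, h⟩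
    refine ⟨p + t • u, ⟨t, rfl⟩, -s, ?_⟩
    rw [← sub_add_cancel q p, ← h, neg_smul]
    abel

theorem dotProduct_crossProduct_eq_zero_iff_mem_span_pair {K : Type*} [Field K]
    {u v w : Fin 3 → K} (huv : LinearIndependent K ![u, v]) :
    w ⬝ᵥ u ⨯₃ v = 0 ↔ w ∈ span K {u, v} := by
  have linearIndependent_iff_notMem : LinearIndependent K ![w, u, v] ↔ w ∉ span K {u, v} := by
    rw [← range_cons_cons_empty u v ![]]
    exact linearIndependent_finCons.trans (and_iff_right huv)
  have linearIndependent_iff_ne_zero : LinearIndependent K ![w, u, v] ↔ w ⬝ᵥ u ⨯₃ v ≠ 0 := by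
    rw [triple_product_eq_det, ← isUnit_iff_ne_zero]
    exact linearIndependent_rows_iff_isUnit.trans (isUnit_iff_isUnit_det _)
  exact not_iff_not.mp (linearIndependent_iff_ne_zero.symm.trans linearIndependent_iff_notMem)

theorem inner_eq_dotProduct_ofLp {ι : Type*} [Fintype ι] (x y : EuclideanSpace ℝ ι) :
    ⟪x, y⟫ = x.ofLp ⬝ᵥ y.ofLp := by
  rw [EuclideanSpace.inner_eq_star_dotProduct, star_trivial, dotProduct_comm]

theorem ofLp_cross (u v : E3) : (cross u v).ofLp = u.ofLp ⨯₃ v.ofLp := rfl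

theorem inner_cross_cross (a b c d : E3) :
    ⟪cross a b, cross c d⟫ = ⟪a, c⟫ * ⟪b, d⟫ - ⟪a, d⟫ * ⟪b, c⟫ := by
  simp only [inner_eq_dotProduct_ofLp, ofLp_cross, cross_dot_cross]

theorem inner_cross_eq_zero_iff_mem_span_pair {u v w : E3} (huv : LinearIndependent ℝ ![u, v]) :
    ⟪w, cross u v⟫ = 0 ↔ w ∈ span ℝ {u, v} := by
  have huv_ofLp : LinearIndependent ℝ ![u.ofLp, v.ofLp] := by
    rw [LinearIndependent.pair_iff] at huv ⊢
    simpa only [← WithLp.ofLp_smul, ← WithLp.ofLp_add, WithLp.ofLp_eq_zero] using huv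
  have mem_span_ofLp : w.ofLp ∈ span ℝ {u.ofLp, v.ofLp} ↔ w ∈ span ℝ {u, v} := by
    rw [mem_span_pair, mem_span_pair]
    simp only [← WithLp.ofLp_smul, ← WithLp.ofLp_add,
      (WithLp.ofLp_injective (V := Fin 3 → ℝ) 2).eq_iff]
  rw [inner_eq_dotProduct_ofLp, ofLp_cross,
    dotProduct_crossProduct_eq_zero_iff_mem_span_pair huv_ofLp, mem_span_ofLp]

theorem inner_cross_sub_cross_cross {u₀ u₁ v₀ v₁ : E3}
    (hu₀ : ‖u₀‖ = 1) (hu₁ : ⟪u₀, u₁⟫ = 0) (hv₀ : ‖v₀‖ = 1) (hv₁ : ⟪v₀, v₁⟫ = 0) :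
    ⟪cross v₀ v₁ - cross u₀ u₁, cross u₀ v₀⟫ = -(⟪u₀, v₁⟫ + ⟪u₁, v₀⟫) := by
  rw [inner_sub_left, inner_cross_cross, inner_cross_cross, real_inner_comm v₀ v₁,
    real_inner_comm u₀ u₁, real_inner_comm u₀ v₁, hu₁, hv₁,
    inner_self_eq_one_of_norm_eq_one hu₀, inner_self_eq_one_of_norm_eq_one hv₀]
  ring

theorem lines_perp_intersect_iff_dual_inner_eq_zero_general {u₀ u₁ v₀ v₁ : E3}
    (hu₀ : ‖u₀‖ = 1) (hu₁ : ⟪u₀, u₁⟫ = 0) (hv₀ : ‖v₀‖ = 1) (hv₁ : ⟪v₀, v₁⟫ = 0)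
    (huv : LinearIndependent ℝ ![u₀, v₀]) :
    (∃ p : E3, (∃ t : ℝ, p = cross u₀ u₁ + t • u₀) ∧ (∃ t : ℝ, p = cross v₀ v₁ + t • v₀)) ↔
      ⟪u₀, v₁⟫ + ⟪u₁, v₀⟫ = 0 := by
  rw [exists_mem_lines_iff_sub_mem_span_pair, ← inner_cross_eq_zero_iff_mem_span_pair huv,
    inner_cross_sub_cross_cross hu₀ hu₁ hv₀ hv₁, neg_eq_zero]

/-- Two oriented lines, given by unit dual vectors `(u₀, u₁)` and `(v₀, v₁)`, intersect
perpendicularly if and only if the dual inner product of the two unit dual vectors vanishes,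
i.e. `⟪u₀,v₀⟫ = 0` and `⟪u₀,v₁⟫ + ⟪u₁,v₀⟫ = 0`. -/
theorem lines_perp_intersect_iff_dual_inner_eq_zero (u₀ u₁ v₀ v₁ : E3)
    (hu₀ : ‖u₀‖ = 1) (hu₁ : ⟪u₀, u₁⟫ = 0)
    (hv₀ : ‖v₀‖ = 1) (hv₁ : ⟪v₀, v₁⟫ = 0) :
    ((∃ p : E3, (∃ t : ℝ, p = cross u₀ u₁ + t • u₀) ∧ (∃ t : ℝ, p = cross v₀ v₁ + t • v₀)) ∧
        ⟪u₀, v₀⟫ = 0) ↔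
      (⟪u₀, v₀⟫ = 0 ∧ ⟪u₀, v₁⟫ + ⟪u₁, v₀⟫ = 0) := by
  rw [and_comm]
  refine and_congr_right fun huv => ?_
  have orthonormal_directions : Orthonormal ℝ ![u₀, v₀] := by simp [hu₀, hv₀, huv]
  exact lines_perp_intersect_iff_dual_inner_eq_zero_general hu₀ hu₁ hv₀ hv₁
    orthonormal_directions.linearIndependent
end
end

section
/- (Dual Frenet formula.) Under the standing hypotheses, for all s ∈ I: v₀'(s) = n₀(s) and v₁'(s) = κ₁(s)·n₀(s) + n₁(s); n₀'(s) = −v₀(s) + τ₀(s)·t₀(s) and n₁'(s) = −κ₁(s)·v₀(s) − v₁(s) + τ₀(s)·t₁(s) + τ₁(s)·t₀(s); t₀'(s) = −τ₀(s)·n₀(s) and t₁'(s) = −τ₀(s)·n₁(s) − τ₁(s)·n₀(s). (These are the real and ε-components of the Frenet formula v̌' = κ̌ ň, ň' = −κ̌ v̌ + τ̌ ť, ť' = −τ̌ ň for the dual frame with κ̌ = 1 + ε κ₁, τ̌ = τ₀ + ε τ₁.) -/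
noncomputable section
open scoped RealInnerProductSpace

/-- Determinant of the 3×3 matrix with columns `u`, `v`, `w`. -/
def det3 (u v w : E3) : ℝ :=
  Matrix.det !![u 0, v 0, w 0; u 1, v 1, w 1; u 2, v 2, w 2]

namespace Ruled

/-- The director curve `e = v₀`. -/
def e (v₀ : ℝ → E3) : ℝ → E3 := v₀

/-- The base curve `r = v₀ × v₁`. -/
def r (v₀ v₁ : ℝ → E3) : ℝ → E3 := fun s => cross (v₀ s) (v₁ s)

/-- The parametrization `F(s,t) = r(s) + t • e(s)` of the ruled surface. -/
def F (v₀ v₁ : ℝ → E3) (s t : ℝ) : E3 := r v₀ v₁ s + t • v₀ s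

/-- `n₀ = v₀'`. -/
def n₀ (v₀ : ℝ → E3) : ℝ → E3 := fun s => deriv v₀ s

/-- `κ₁ = ⟪v₀', v₁'⟫`, the ε-part of the dual curvature. -/
def κ₁ (v₀ v₁ : ℝ → E3) : ℝ → ℝ := fun s => ⟪deriv v₀ s, deriv v₁ s⟫

/-- `n₁ = v₁' - κ₁ • v₀'`. -/
def n₁ (v₀ v₁ : ℝ → E3) : ℝ → E3 := fun s => deriv v₁ s - κ₁ v₀ v₁ s • deriv v₀ s

/-- `t₀ = v₀ × n₀`. -/
def t₀ (v₀ : ℝ → E3) : ℝ → E3 := fun s => cross (v₀ s) (n₀ v₀ s)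

/-- `t₁ = v₀ × n₁ + v₁ × n₀`. -/
def t₁ (v₀ v₁ : ℝ → E3) : ℝ → E3 :=
  fun s => cross (v₀ s) (n₁ v₀ v₁ s) + cross (v₁ s) (n₀ v₀ s)

/-- `τ₀ = ⟪n₀', t₀⟫`, the real part of the dual torsion. -/
def τ₀ (v₀ : ℝ → E3) : ℝ → ℝ := fun s => ⟪deriv (n₀ v₀) s, t₀ v₀ s⟫

/-- `τ₁ = ⟪n₀', t₁⟫ + ⟪n₁', t₀⟫`, the ε-part of the dual torsion. -/
def τ₁ (v₀ v₁ : ℝ → E3) : ℝ → ℝ :=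
  fun s => ⟪deriv (n₀ v₀) s, t₁ v₀ v₁ s⟫ + ⟪deriv (n₁ v₀ v₁) s, t₀ v₀ s⟫

/-- The striction curve `σ(s) = r(s) - ⟪r'(s), e'(s)⟫ • e(s)`. -/
def strict (v₀ v₁ : ℝ → E3) : ℝ → E3 :=
  fun s => r v₀ v₁ s - ⟪deriv (r v₀ v₁) s, deriv (e v₀) s⟫ • e v₀ s

end Ruled

open Ruled

/-!
Orthonormality, differentiation and the cross product make sense for vectors with entries in any
commutative normed algebra. Over such an algebra the classical Frenet argument goes through as soon
as the curvature is a unit: differentiating `v ⬝ v = 1`, `v ⬝ n = 0` and `n ⬝ n = 1` gives the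
coordinates of `n'` in the orthonormal frame `v`, `n`, `t = v × n`, and then `t' = v × n'`.
Over the dual numbers `ℝ[ε]` the curvature `1 + ε κ₁` is always a unit, and comparing real parts
and `ε`-parts yields the dual Frenet formula.
-/

section DotAndCross

open scoped Matrix

variable {R : Type*} [CommRing R]

theorem cross_cross_eq_neg_of_orthogonal {a b : Fin 3 → R} (haa : a ⬝ᵥ a = 1) (hab : a ⬝ᵥ b = 0) :
    a ⨯₃ (a ⨯₃ b) = -b := by
  rw [cross_cross_eq_smul_sub_smul', haa, hab, zero_smul, one_smul, zero_sub]

theorem eq_sum_dotProduct_smul_of_orthonormal {a b : Fin 3 → R} (haa : a ⬝ᵥ a = 1)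
    (hbb : b ⬝ᵥ b = 1) (hab : a ⬝ᵥ b = 0) (z : Fin 3 → R) :
    z = (z ⬝ᵥ a) • a + (z ⬝ᵥ b) • b + (z ⬝ᵥ a ⨯₃ b) • (a ⨯₃ b) := by
  have hba : b ⬝ᵥ a = 0 := by rw [dotProduct_comm, hab]
  have cross_dot_self : (a ⨯₃ b) ⬝ᵥ (a ⨯₃ b) = 1 := by
    rw [cross_dot_cross, haa, hbb, hab]; ring
  have expand_once : (a ⨯₃ b) ⨯₃ z = (z ⬝ᵥ a) • b - (z ⬝ᵥ b) • a := by
    rw [cross_cross_eq_smul_sub_smul, dotProduct_comm a, dotProduct_comm b]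
  have expand_twice := cross_cross_eq_smul_sub_smul' (a ⨯₃ b) (a ⨯₃ b) z
  rw [expand_once, cross_dot_self, map_sub, map_smul, map_smul,
    cross_cross_eq_smul_sub_smul, cross_cross_eq_smul_sub_smul,
    haa, hbb, hab, hba, dotProduct_comm _ z] at expand_twice
  linear_combination (norm := module) expand_twice

end DotAndCross

section Calculus

open scoped Matrix Topology

variable {𝕜 A ι : Type*} [NontriviallyNormedField 𝕜] [NormedCommRing A] [NormedAlgebra 𝕜 A]
  {s : 𝕜}

theorem hasDerivAt_euclidean {𝕜 : Type*} [RCLike 𝕜] [Fintype ι] {f : 𝕜 → EuclideanSpace 𝕜 ι}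
    {f' : EuclideanSpace 𝕜 ι} {s : 𝕜} :
    HasDerivAt f f' s ↔ ∀ i, HasDerivAt (fun u => f u i) (f' i) s := by
  rw [← hasDerivAt_pi]
  exact ⟨(EuclideanSpace.equiv ι 𝕜).hasFDerivAt.comp_hasDerivAt s,
    (EuclideanSpace.equiv ι 𝕜).symm.hasFDerivAt.comp_hasDerivAt s⟩

theorem hasDerivAt_dotProduct [Fintype ι] {f g : 𝕜 → ι → A} {f' g' : ι → A}
    (hf : HasDerivAt f f' s) (hg : HasDerivAt g g' s) :
    HasDerivAt (fun u => f u ⬝ᵥ g u) (f' ⬝ᵥ g s + f s ⬝ᵥ g') s := by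
  simp only [dotProduct, ← Finset.sum_add_distrib]
  exact .fun_sum fun i _ => (hasDerivAt_pi.1 hf i).mul (hasDerivAt_pi.1 hg i)

theorem hasDerivAt_crossProduct {f g : 𝕜 → Fin 3 → A} {f' g' : Fin 3 → A}
    (hf : HasDerivAt f f' s) (hg : HasDerivAt g g' s) :
    HasDerivAt (fun u => f u ⨯₃ g u) (f' ⨯₃ g s + f s ⨯₃ g') s := by
  have hmul (i j : Fin 3) := (hasDerivAt_pi.1 hf i).mul (hasDerivAt_pi.1 hg j)
  refine hasDerivAt_pi.2 fun i => ?_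
  fin_cases i
  · exact ((hmul 1 2).sub (hmul 2 1)).congr_deriv (by simp [cross_apply]; ring)
  · exact ((hmul 2 0).sub (hmul 0 2)).congr_deriv (by simp [cross_apply]; ring)
  · exact ((hmul 0 1).sub (hmul 1 0)).congr_deriv (by simp [cross_apply]; ring)

theorem dotProduct_add_dotProduct_eq_zero_of_hasDerivAt [Fintype ι] {f g : 𝕜 → ι → A}
    {f' g' : ι → A} {c : A} (hf : HasDerivAt f f' s) (hg : HasDerivAt g g' s)
    (hconst : ∀ᶠ u in 𝓝 s, f u ⬝ᵥ g u = c) :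
    f' ⬝ᵥ g s + f s ⬝ᵥ g' = 0 :=
  (hasDerivAt_dotProduct hf hg).unique ((hasDerivAt_const s c).congr_of_eventuallyEq hconst)

theorem dotProduct_eq_zero_of_hasDerivAt [NeZero (2 : 𝕜)] [Fintype ι] {f : 𝕜 → ι → A}
    {f' : ι → A} {c : A} (hf : HasDerivAt f f' s) (hconst : ∀ᶠ u in 𝓝 s, f u ⬝ᵥ f u = c) :
    f s ⬝ᵥ f' = 0 := by
  have h := dotProduct_add_dotProduct_eq_zero_of_hasDerivAt hf hf hconst
  rw [dotProduct_comm f', ← two_smul 𝕜] at h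
  exact (smul_eq_zero_iff_right two_ne_zero).1 h

theorem dotProduct_eq_zero_of_hasDerivAt_smul [NeZero (2 : 𝕜)] [Fintype ι] {f : 𝕜 → ι → A}
    {n : ι → A} {k c : A} (hf : HasDerivAt f (k • n) s) (hk : IsUnit k)
    (hconst : ∀ᶠ u in 𝓝 s, f u ⬝ᵥ f u = c) : f s ⬝ᵥ n = 0 := by
  have h := dotProduct_eq_zero_of_hasDerivAt hf hconst
  rwa [dotProduct_smul, smul_eq_mul, hk.mul_right_eq_zero] at h

theorem hasDerivAt_normal_and_binormal [NeZero (2 : 𝕜)] {v n : 𝕜 → Fin 3 → A} {κ : 𝕜 → A}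
    {n' : Fin 3 → A} (hvv : ∀ᶠ u in 𝓝 s, v u ⬝ᵥ v u = 1) (hnn : ∀ᶠ u in 𝓝 s, n u ⬝ᵥ n u = 1)
    (hv : ∀ᶠ u in 𝓝 s, HasDerivAt v (κ u • n u) u) (hκ : ∀ᶠ u in 𝓝 s, IsUnit (κ u))
    (hn : HasDerivAt n n' s) :
    HasDerivAt n (-(κ s • v s) + (n' ⬝ᵥ v s ⨯₃ n s) • (v s ⨯₃ n s)) s ∧
      HasDerivAt (fun u => v u ⨯₃ n u) (-((n' ⬝ᵥ v s ⨯₃ n s) • n s)) s := by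
  have hvn : ∀ᶠ u in 𝓝 s, v u ⬝ᵥ n u = 0 := by
    filter_upwards [hv, hκ, hvv.eventually_nhds] with u hvu hκu hvvu
    exact dotProduct_eq_zero_of_hasDerivAt_smul hvu hκu hvvu
  have hn'v : n' ⬝ᵥ v s = -κ s := by
    have h := dotProduct_add_dotProduct_eq_zero_of_hasDerivAt hv.self_of_nhds hn hvn
    rw [smul_dotProduct, hnn.self_of_nhds, smul_eq_mul, mul_one, dotProduct_comm] at h
    exact eq_neg_of_add_eq_zero_right h
  have hn'n : n' ⬝ᵥ n s = 0 := by
    rw [dotProduct_comm, dotProduct_eq_zero_of_hasDerivAt hn hnn]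
  have n'_eq : n' = -(κ s • v s) + (n' ⬝ᵥ v s ⨯₃ n s) • (v s ⨯₃ n s) := by
    have h := eq_sum_dotProduct_smul_of_orthonormal hvv.self_of_nhds hnn.self_of_nhds
      hvn.self_of_nhds n'
    rwa [hn'v, hn'n, zero_smul, add_zero, neg_smul] at h
  refine ⟨n'_eq ▸ hn, (hasDerivAt_crossProduct hv.self_of_nhds hn).congr_deriv ?_⟩
  calc (κ s • n s) ⨯₃ n s + v s ⨯₃ n'
      = v s ⨯₃ n' := by rw [LinearMap.map_smul₂, cross_self, smul_zero, zero_add]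
    _ = (n' ⬝ᵥ v s ⨯₃ n s) • (v s ⨯₃ (v s ⨯₃ n s)) := by
        conv_lhs => rw [n'_eq]
        rw [map_add, map_neg, map_smul, cross_self, smul_zero, neg_zero, zero_add, map_smul]
    _ = -((n' ⬝ᵥ v s ⨯₃ n s) • n s) := by
        rw [cross_cross_eq_neg_of_orthogonal hvv.self_of_nhds hvn.self_of_nhds, smul_neg]

end Calculus

section DualVectors

open scoped Matrix DualNumber
open TrivSqZeroExt

variable {ι : Type*}

/-- The dual vector `x + ε y`, encoded as a tuple of dual numbers so that the dot and cross products
over the commutative ring `ℝ[ε]` are the ones of dual vector algebra. -/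
def dualVec (x y : EuclideanSpace ℝ ι) : ι → ℝ[ε] := fun i => inl (x i) + inr (y i)

theorem dualVec_add_dualVec (x y x' y' : EuclideanSpace ℝ ι) :
    dualVec x y + dualVec x' y' = dualVec (x + x') (y + y') := by
  ext i <;> simp [dualVec]

theorem neg_dualVec (x y : EuclideanSpace ℝ ι) : -dualVec x y = dualVec (-x) (-y) := by
  ext i <;> simp [dualVec]

theorem smul_dualVec (a b : ℝ) (x y : EuclideanSpace ℝ ι) :
    (inl a + inr b : ℝ[ε]) • dualVec x y = dualVec (a • x) (a • y + b • x) := by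
  ext i <;> simp [dualVec]

theorem dualVec_dotProduct_dualVec [Fintype ι] (x y x' y' : EuclideanSpace ℝ ι) :
    dualVec x y ⬝ᵥ dualVec x' y' = inl ⟪x, x'⟫ + inr (⟪x, y'⟫ + ⟪y, x'⟫) := by
  ext <;> simp [dualVec, dotProduct, fst_sum, snd_sum, PiLp.inner_apply, Finset.sum_add_distrib,
    mul_comm]

theorem dualVec_dotProduct_self_eq_one [Fintype ι] {x y : EuclideanSpace ℝ ι} (hx : ‖x‖ = 1)
    (hxy : ⟪x, y⟫ = 0) : dualVec x y ⬝ᵥ dualVec x y = 1 := by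
  rw [dualVec_dotProduct_dualVec, real_inner_comm x y, hxy, inner_self_eq_one_of_norm_eq_one hx,
    add_zero, inr_zero, inl_one, add_zero]

theorem dualVec_cross_dualVec (x y x' y' : E3) :
    dualVec x y ⨯₃ dualVec x' y' = dualVec (cross x x') (cross x y' + cross y x') := by
  ext i <;> fin_cases i <;> simp [dualVec, cross, cross_apply] <;> ring

theorem hasDerivAt_inl_add_inr_iff {𝕜 : Type*} [NontriviallyNormedField 𝕜] {f g : 𝕜 → 𝕜}
    {f' g' s : 𝕜} :
    HasDerivAt (fun u => (inl (f u) + inr (g u) : 𝕜[ε])) (inl f' + inr g') s ↔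
      HasDerivAt f f' s ∧ HasDerivAt g g' s := by
  refine ⟨fun h => ⟨?_, ?_⟩, fun ⟨hf, hg⟩ => ?_⟩
  · simpa [Function.comp_def] using (fstCLM 𝕜 𝕜).hasFDerivAt.comp_hasDerivAt s h
  · simpa [Function.comp_def] using (sndCLM 𝕜 𝕜).hasFDerivAt.comp_hasDerivAt s h
  · exact ((inlCLM 𝕜 𝕜).hasFDerivAt.comp_hasDerivAt s hf).add
      ((inrCLM 𝕜 𝕜).hasFDerivAt.comp_hasDerivAt s hg)

theorem hasDerivAt_dualVec_iff [Fintype ι] {f g : ℝ → EuclideanSpace ℝ ι}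
    {f' g' : EuclideanSpace ℝ ι} {s : ℝ} :
    HasDerivAt (fun u => dualVec (f u) (g u)) (dualVec f' g') s ↔
      HasDerivAt f f' s ∧ HasDerivAt g g' s := by
  simp only [hasDerivAt_pi, hasDerivAt_euclidean, dualVec, hasDerivAt_inl_add_inr_iff, forall_and]

end DualVectors

namespace Ruled

open scoped Matrix Topology DualNumber
open TrivSqZeroExt

/-- The dual curve `v̌ = v₀ + ε v₁` of rulings. -/
def dualDirector (v₀ v₁ : ℝ → E3) (s : ℝ) : Fin 3 → ℝ[ε] := dualVec (v₀ s) (v₁ s)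

/-- The dual normal `ň = n₀ + ε n₁`. -/
def dualNormal (v₀ v₁ : ℝ → E3) (s : ℝ) : Fin 3 → ℝ[ε] := dualVec (n₀ v₀ s) (n₁ v₀ v₁ s)

/-- The dual binormal `ť = t₀ + ε t₁`. -/
def dualBinormal (v₀ v₁ : ℝ → E3) (s : ℝ) : Fin 3 → ℝ[ε] := dualVec (t₀ v₀ s) (t₁ v₀ v₁ s)

/-- The dual curvature `κ̌ = 1 + ε κ₁`. -/
def dualCurvature (v₀ v₁ : ℝ → E3) (s : ℝ) : ℝ[ε] := inl 1 + inr (κ₁ v₀ v₁ s)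

/-- The dual torsion `τ̌ = τ₀ + ε τ₁`. -/
def dualTorsion (v₀ v₁ : ℝ → E3) (s : ℝ) : ℝ[ε] := inl (τ₀ v₀ s) + inr (τ₁ v₀ v₁ s)

variable {v₀ v₁ : ℝ → E3} {s : ℝ}

theorem isUnit_dualCurvature (v₀ v₁ : ℝ → E3) (s : ℝ) : IsUnit (dualCurvature v₀ v₁ s) := by
  simp [dualCurvature, isUnit_iff_isUnit_fst]

theorem dualDirector_cross_dualNormal (v₀ v₁ : ℝ → E3) (s : ℝ) :
    dualDirector v₀ v₁ s ⨯₃ dualNormal v₀ v₁ s = dualBinormal v₀ v₁ s :=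
  dualVec_cross_dualVec ..

theorem dualVec_deriv_dotProduct_dualBinormal (v₀ v₁ : ℝ → E3) (s : ℝ) :
    dualVec (deriv (n₀ v₀) s) (deriv (n₁ v₀ v₁) s) ⬝ᵥ dualBinormal v₀ v₁ s =
      dualTorsion v₀ v₁ s :=
  dualVec_dotProduct_dualVec ..

theorem dualDirector_dotProduct_self (hunit : ‖v₀ s‖ = 1) (horth : ⟪v₀ s, v₁ s⟫ = 0) :
    dualDirector v₀ v₁ s ⬝ᵥ dualDirector v₀ v₁ s = 1 :=
  dualVec_dotProduct_self_eq_one hunit horth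

theorem inner_n₀_n₁ (harc : ‖deriv v₀ s‖ = 1) : ⟪n₀ v₀ s, n₁ v₀ v₁ s⟫ = 0 := by
  rw [n₀, n₁, κ₁, inner_sub_right, real_inner_smul_right, inner_self_eq_one_of_norm_eq_one harc,
    mul_one, sub_self]

theorem dualNormal_dotProduct_self (harc : ‖deriv v₀ s‖ = 1) :
    dualNormal v₀ v₁ s ⬝ᵥ dualNormal v₀ v₁ s = 1 :=
  dualVec_dotProduct_self_eq_one harc (inner_n₀_n₁ harc)

theorem hasDerivAt_dualDirector (hv₀ : DifferentiableAt ℝ v₀ s) (hv₁ : DifferentiableAt ℝ v₁ s) :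
    HasDerivAt (dualDirector v₀ v₁) (dualCurvature v₀ v₁ s • dualNormal v₀ v₁ s) s := by
  rw [dualCurvature, dualNormal, smul_dualVec]
  refine hasDerivAt_dualVec_iff.2 ⟨?_, ?_⟩
  · simpa [n₀] using hv₀.hasDerivAt
  · simpa [n₀, n₁] using hv₁.hasDerivAt

theorem differentiableAt_n₀ (hv₀ : ContDiffAt ℝ 2 v₀ s) : DifferentiableAt ℝ (n₀ v₀) s :=
  (hv₀.derivWithin (m := 1) (by norm_num)).differentiableAt one_ne_zero

theorem differentiableAt_n₁ (hv₀ : ContDiffAt ℝ 2 v₀ s) (hv₁ : ContDiffAt ℝ 2 v₁ s) :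
    DifferentiableAt ℝ (n₁ v₀ v₁) s :=
  have hv₀' := differentiableAt_n₀ hv₀
  have hv₁' := differentiableAt_n₀ hv₁
  hv₁'.sub ((hv₀'.inner ℝ hv₁').smul hv₀')

theorem hasDerivAt_dualNormal_and_dualBinormal
    (hv₀ : ContDiffAt ℝ 2 v₀ s) (hv₁ : ContDiffAt ℝ 2 v₁ s)
    (hunit : ∀ᶠ u in 𝓝 s, ‖v₀ u‖ = 1) (horth : ∀ᶠ u in 𝓝 s, ⟪v₀ u, v₁ u⟫ = 0)
    (harc : ∀ᶠ u in 𝓝 s, ‖deriv v₀ u‖ = 1) :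
    HasDerivAt (dualNormal v₀ v₁) (-(dualCurvature v₀ v₁ s • dualDirector v₀ v₁ s) +
        dualTorsion v₀ v₁ s • dualBinormal v₀ v₁ s) s ∧
      HasDerivAt (dualBinormal v₀ v₁) (-(dualTorsion v₀ v₁ s • dualNormal v₀ v₁ s)) s := by
  have hvv := hunit.and horth |>.mono fun u hu => dualDirector_dotProduct_self hu.1 hu.2
  have hnn := harc.mono fun u hu => dualNormal_dotProduct_self (v₁ := v₁) hu
  have hv : ∀ᶠ u in 𝓝 s,
      HasDerivAt (dualDirector v₀ v₁) (dualCurvature v₀ v₁ u • dualNormal v₀ v₁ u) u := by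
    filter_upwards [hv₀.eventually (by simp), hv₁.eventually (by simp)] with u hu₀ hu₁
    exact hasDerivAt_dualDirector (hu₀.differentiableAt two_ne_zero)
      (hu₁.differentiableAt two_ne_zero)
  have hn : HasDerivAt (dualNormal v₀ v₁)
      (dualVec (deriv (n₀ v₀) s) (deriv (n₁ v₀ v₁) s)) s :=
    hasDerivAt_dualVec_iff.2
      ⟨(differentiableAt_n₀ hv₀).hasDerivAt, (differentiableAt_n₁ hv₀ hv₁).hasDerivAt⟩
  simpa only [dualDirector_cross_dualNormal, dualVec_deriv_dotProduct_dualBinormal] using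
    hasDerivAt_normal_and_binormal hvv hnn hv (.of_forall (isUnit_dualCurvature v₀ v₁)) hn

end Ruled

open scoped Topology in
theorem dual_frenet_formula_general {v₀ v₁ : ℝ → E3} {s : ℝ}
    (hv₀ : ContDiffAt ℝ 2 v₀ s) (hv₁ : ContDiffAt ℝ 2 v₁ s)
    (hunit : ∀ᶠ u in 𝓝 s, ‖v₀ u‖ = 1) (horth : ∀ᶠ u in 𝓝 s, ⟪v₀ u, v₁ u⟫ = 0)
    (harc : ∀ᶠ u in 𝓝 s, ‖deriv v₀ u‖ = 1) :
    deriv v₀ s = n₀ v₀ s ∧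
    deriv v₁ s = κ₁ v₀ v₁ s • n₀ v₀ s + n₁ v₀ v₁ s ∧
    deriv (n₀ v₀) s = -v₀ s + τ₀ v₀ s • t₀ v₀ s ∧
    deriv (n₁ v₀ v₁) s =
      -(κ₁ v₀ v₁ s • v₀ s) - v₁ s + τ₀ v₀ s • t₁ v₀ v₁ s + τ₁ v₀ v₁ s • t₀ v₀ s ∧
    deriv (t₀ v₀) s = -(τ₀ v₀ s • n₀ v₀ s) ∧
    deriv (t₁ v₀ v₁) s = -(τ₀ v₀ s • n₁ v₀ v₁ s) - τ₁ v₀ v₁ s • n₀ v₀ s := by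
  obtain ⟨hn, ht⟩ := hasDerivAt_dualNormal_and_dualBinormal hv₀ hv₁ hunit horth harc
  rw [dualCurvature, dualTorsion, dualDirector, dualBinormal, smul_dualVec, smul_dualVec,
    neg_dualVec, dualVec_add_dualVec] at hn
  rw [dualTorsion, dualNormal, smul_dualVec, neg_dualVec] at ht
  obtain ⟨hn₀, hn₁⟩ := hasDerivAt_dualVec_iff.1 hn
  obtain ⟨ht₀, ht₁⟩ := hasDerivAt_dualVec_iff.1 ht
  refine ⟨rfl, ?_, hn₀.deriv.trans ?_, hn₁.deriv.trans ?_, ht₀.deriv, ht₁.deriv.trans ?_⟩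
  · rw [n₁, n₀, add_sub_cancel]
  all_goals module

/-- The dual Frenet formula for an arc-length parametrized non-cylindrical ruled surface,
written out in its real and ε-components. -/
theorem dual_frenet_formula
    (I : Set ℝ) (v₀ v₁ : ℝ → E3)
    (hI : IsOpen I) (hI' : I.OrdConnected)
    (hv₀ : ContDiffOn ℝ (⊤ : ℕ∞) v₀ I) (hv₁ : ContDiffOn ℝ (⊤ : ℕ∞) v₁ I)
    (hunit : ∀ s ∈ I, ‖v₀ s‖ = 1) (horth : ∀ s ∈ I, ⟪v₀ s, v₁ s⟫ = 0)
    (harc : ∀ s ∈ I, ‖deriv v₀ s‖ = 1) :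
    ∀ s ∈ I,
      deriv v₀ s = n₀ v₀ s ∧
      deriv v₁ s = κ₁ v₀ v₁ s • n₀ v₀ s + n₁ v₀ v₁ s ∧
      deriv (n₀ v₀) s = -v₀ s + τ₀ v₀ s • t₀ v₀ s ∧
      deriv (n₁ v₀ v₁) s =
        -(κ₁ v₀ v₁ s • v₀ s) - v₁ s + τ₀ v₀ s • t₁ v₀ v₁ s + τ₁ v₀ v₁ s • t₀ v₀ s ∧
      deriv (t₀ v₀) s = -(τ₀ v₀ s • n₀ v₀ s) ∧
      deriv (t₁ v₀ v₁) s = -(τ₀ v₀ s • n₁ v₀ v₁ s) - τ₁ v₀ v₁ s • n₀ v₀ s := by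
  intro s hs
  have hIs := hI.mem_nhds hs
  exact dual_frenet_formula_general ((hv₀.contDiffAt hIs).of_le (by norm_cast))
    ((hv₁.contDiffAt hIs).of_le (by norm_cast)) (Filter.eventually_of_mem hIs hunit)
    (Filter.eventually_of_mem hIs horth) (Filter.eventually_of_mem hIs harc)
end
end

section
/- Under the standing hypotheses, the curve σ(s) = r(s) − ⟪r'(s), e'(s)⟫·e(s) satisfies ⟪σ'(s), e'(s)⟫ = 0 for all s ∈ I (the defining property of the striction curve of the ruled surface). -/
noncomputable section
open scoped RealInnerProductSpace

open Ruled

open scoped Topology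

theorem contDiffOn_cross {X : Type*} [NormedAddCommGroup X] [NormedSpace ℝ X] {S : Set X}
    {n : WithTop ℕ∞} {u v : X → E3} (hu : ContDiffOn ℝ n u S) (hv : ContDiffOn ℝ n v S) :
    ContDiffOn ℝ n (fun x => cross (u x) (v x)) S := by
  rw [contDiffOn_euclidean] at hu hv ⊢
  intro i
  fin_cases i
  · exact ((hu 1).mul (hv 2)).sub ((hu 2).mul (hv 1))
  · exact ((hu 2).mul (hv 0)).sub ((hu 0).mul (hv 2))
  · exact ((hu 0).mul (hv 1)).sub ((hu 1).mul (hv 0))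

section InnerProductSpace

variable {E : Type*} [NormedAddCommGroup E] [InnerProductSpace ℝ E] {γ δ : ℝ → E} {s : ℝ}

theorem inner_eq_zero_of_hasDerivAt_of_norm_eventually_const {δ' : E} {ρ : ℝ}
    (hδ : HasDerivAt δ δ' s) (hnorm : ∀ᶠ t in 𝓝 s, ‖δ t‖ = ρ) : ⟪δ s, δ'⟫ = 0 := by
  have hsq : HasDerivAt (‖δ ·‖ ^ 2) 0 s := by
    refine (hasDerivAt_const s (ρ ^ 2)).congr_of_eventuallyEq ?_
    filter_upwards [hnorm] with t ht
    simp [ht]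
  simpa using hδ.norm_sq.unique hsq

/-- Hence the coefficient of a striction curve is forced: `c = ⟪γ', δ'⟫ / ‖δ'‖ ^ 2` wherever
`δ' ≠ 0`, which is `⟪γ', δ'⟫` when `δ` has unit speed. -/
theorem inner_deriv_sub_smul_of_inner_deriv_eq_zero {c : ℝ → ℝ} (hγ : DifferentiableAt ℝ γ s)
    (hc : DifferentiableAt ℝ c s) (hδ : DifferentiableAt ℝ δ s) (hperp : ⟪δ s, deriv δ s⟫ = 0) :
    ⟪deriv (fun t => γ t - c t • δ t) s, deriv δ s⟫ =
      ⟪deriv γ s, deriv δ s⟫ - c s * ‖deriv δ s‖ ^ 2 := by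
  have hderiv : deriv (fun t => γ t - c t • δ t) s =
      deriv γ s - (c s • deriv δ s + deriv c s • δ s) :=
    (hγ.hasDerivAt.sub (hc.hasDerivAt.smul hδ.hasDerivAt)).deriv
  rw [hderiv, inner_sub_left, inner_add_left, real_inner_smul_left, real_inner_smul_left, hperp,
    real_inner_self_eq_norm_sq, mul_zero, add_zero]

theorem striction_curve_defining_property_general {I : Set ℝ} {ρ : ℝ} (hI : IsOpen I)
    (hγ : ContDiffOn ℝ 2 γ I) (hδ : ContDiffOn ℝ 2 δ I) (hnorm : ∀ s ∈ I, ‖δ s‖ = ρ)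
    (hspeed : ∀ s ∈ I, ‖deriv δ s‖ = 1) :
    ∀ s ∈ I, ⟪deriv (fun t => γ t - ⟪deriv γ t, deriv δ t⟫ • δ t) s, deriv δ s⟫ = 0 := by
  intro s hs
  have hmem : I ∈ 𝓝 s := hI.mem_nhds hs
  have hγs : ContDiffAt ℝ 2 γ s := hγ.contDiffAt hmem
  have hδs : ContDiffAt ℝ 2 δ s := hδ.contDiffAt hmem
  have hδ_diff : DifferentiableAt ℝ δ s := hδs.differentiableAt two_ne_zero
  have hcoeff : DifferentiableAt ℝ (fun t => ⟪deriv γ t, deriv δ t⟫) s :=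
    ((hγs.derivWithin one_add_one_eq_two.le).differentiableAt one_ne_zero).inner ℝ
      ((hδs.derivWithin one_add_one_eq_two.le).differentiableAt one_ne_zero)
  have hperp : ⟪δ s, deriv δ s⟫ = 0 :=
    inner_eq_zero_of_hasDerivAt_of_norm_eventually_const hδ_diff.hasDerivAt
      (Filter.eventually_of_mem hmem hnorm)
  rw [inner_deriv_sub_smul_of_inner_deriv_eq_zero (hγs.differentiableAt two_ne_zero) hcoeff
    hδ_diff hperp, hspeed s hs, one_pow, mul_one, sub_self]

end InnerProductSpace

/-- The curve `σ(s) = r(s) - ⟪r'(s), e'(s)⟫ • e(s)` satisfies `⟪σ'(s), e'(s)⟫ = 0`,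
the defining property of the striction curve. -/
theorem striction_curve_defining_property
    (I : Set ℝ) (v₀ v₁ : ℝ → E3)
    (hI : IsOpen I) (hI' : I.OrdConnected)
    (hv₀ : ContDiffOn ℝ (⊤ : ℕ∞) v₀ I) (hv₁ : ContDiffOn ℝ (⊤ : ℕ∞) v₁ I)
    (hunit : ∀ s ∈ I, ‖v₀ s‖ = 1) (horth : ∀ s ∈ I, ⟪v₀ s, v₁ s⟫ = 0)
    (harc : ∀ s ∈ I, ‖deriv v₀ s‖ = 1) :
    ∀ s ∈ I, ⟪deriv (strict v₀ v₁) s, deriv (e v₀) s⟫ = 0 := by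
  have htwo : (2 : WithTop ℕ∞) ≤ (⊤ : ℕ∞) := WithTop.coe_le_coe.mpr le_top
  exact striction_curve_defining_property_general hI ((contDiffOn_cross hv₀ hv₁).of_le htwo)
    (hv₀.of_le htwo) hunit harc
end
end

section
/- Under the standing hypotheses, the striction curve σ(s) = r(s) − ⟪r'(s), e'(s)⟫·e(s) satisfies, for all s ∈ I: σ(s) × v₀(s) = v₁(s), σ(s) × n₀(s) = n₁(s), and σ(s) × t₀(s) = t₁(s). (In particular, σ(s) lies on each of the three lines corresponding to the unit dual vectors v̌(s), ň(s), ť(s).) -/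
noncomputable section
open scoped RealInnerProductSpace

open Ruled

/-!
Since `v₀` is a unit vector orthogonal to `v₁`, the base curve satisfies `r × v₀ = v₁`, and adding
a multiple of `v₀` to `r` changes nothing; hence `σ × v₀ = v₁`. Differentiating `r × v₀ = v₁` gives
`v₁' = r' × v₀ + r × n₀`. As `n₀` is a unit vector orthogonal to `v₀`, the vector `r' × v₀` splits
into a multiple of `n₀`, with coefficient `κ₁`, and `-⟪r', n₀⟫ • (v₀ × n₀)`; the latter is exactly
what passing from `r` to `σ` absorbs, so `σ × n₀ = n₁`. Finally `σ × ·` is a derivation of the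
cross product, so the third identity follows from the first two.
-/

open scoped Topology

lemma cross_eq_toLp_crossProduct (u v : E3) :
    cross u v = WithLp.toLp 2 (crossProduct u.ofLp v.ofLp) :=
  rfl

lemma isBilinearMap_cross : IsBilinearMap ℝ cross where
  add_left u₁ u₂ v := by simp [cross_eq_toLp_crossProduct]
  smul_left c u v := by simp [cross_eq_toLp_crossProduct]
  add_right u v₁ v₂ := by simp [cross_eq_toLp_crossProduct]
  smul_right c u v := by simp [cross_eq_toLp_crossProduct]

lemma cross_sub_smul_left (p u v : E3) (c : ℝ) :
    cross (p - c • u) v = cross p v - c • cross u v := by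
  simp [cross_eq_toLp_crossProduct]

lemma real_inner_eq_dotProduct {ι : Type*} [Fintype ι] (u v : EuclideanSpace ℝ ι) :
    ⟪u, v⟫ = u.ofLp ⬝ᵥ v.ofLp := by
  rw [EuclideanSpace.inner_eq_star_dotProduct, star_trivial, dotProduct_comm]

lemma neg_cross_eq_cross_swap (u v : E3) : -cross u v = cross v u :=
  congrArg (WithLp.toLp 2) (cross_anticomm u.ofLp v.ofLp)

lemma cross_self_eq_zero (u : E3) : cross u u = 0 :=
  congrArg (WithLp.toLp 2) (cross_self u.ofLp)

lemma inner_cross_self_eq_zero (u v : E3) : ⟪v, cross u v⟫ = 0 := by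
  rw [real_inner_eq_dotProduct]
  exact dot_cross_self u.ofLp v.ofLp

lemma cross_cross_leibniz (u v w : E3) :
    cross u (cross v w) = cross (cross u v) w + cross v (cross u w) :=
  congrArg (WithLp.toLp 2) (leibniz_cross u.ofLp v.ofLp w.ofLp)

lemma cross_cross_right_eq (u v w : E3) :
    cross u (cross v w) = ⟪u, w⟫ • v - ⟪v, u⟫ • w := by
  simp only [real_inner_eq_dotProduct]
  exact congrArg (WithLp.toLp 2) (cross_cross_eq_smul_sub_smul' u.ofLp v.ofLp w.ofLp)

lemma cross_cross_left_eq (u v w : E3) :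
    cross (cross u v) w = ⟪u, w⟫ • v - ⟪v, w⟫ • u := by
  simp only [real_inner_eq_dotProduct]
  exact congrArg (WithLp.toLp 2) (cross_cross_eq_smul_sub_smul u.ofLp v.ofLp w.ofLp)

lemma cross_cross_self_of_inner_eq_zero {u v : E3} (hu : ‖u‖ = 1) (huv : ⟪u, v⟫ = 0) :
    cross (cross u v) u = v := by
  rw [cross_cross_left_eq, inner_self_eq_one_of_norm_eq_one hu, real_inner_comm, huv, one_smul,
    zero_smul, sub_zero]

lemma cross_eq_inner_smul_sub_of_inner_eq_zero {n u : E3} (hn : ‖n‖ = 1) (hun : ⟪u, n⟫ = 0)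
    (w : E3) : cross w u = ⟪n, cross w u⟫ • n - ⟪w, n⟫ • cross u n := by
  have cross_n_eq_neg_smul : cross n (cross w u) = -⟪w, n⟫ • u := by
    rw [cross_cross_right_eq, real_inner_comm, hun, zero_smul, zero_sub, neg_smul]
  calc cross w u
      = ⟪n, cross w u⟫ • n - cross n (cross n (cross w u)) := by
        rw [cross_cross_right_eq n n, inner_self_eq_one_of_norm_eq_one hn, one_smul,
          sub_sub_cancel]
    _ = ⟪n, cross w u⟫ • n - ⟪w, n⟫ • cross u n := by
      rw [cross_n_eq_neg_smul, isBilinearMap_cross.smul_right, ← neg_cross_eq_cross_swap u n,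
        neg_smul_neg]

lemma cross_sub_inner_smul_left_of_inner_eq_zero {n u : E3} (hn : ‖n‖ = 1) (hun : ⟪u, n⟫ = 0)
    (p w : E3) :
    cross (p - ⟪w, n⟫ • u) n =
      cross w u + cross p n - ⟪n, cross w u + cross p n⟫ • n := by
  have normal_part : ⟪n, cross w u + cross p n⟫ = ⟪n, cross w u⟫ := by
    rw [inner_add_right, inner_cross_self_eq_zero, add_zero]
  calc cross (p - ⟪w, n⟫ • u) n
      = cross p n - ⟪w, n⟫ • cross u n := cross_sub_smul_left p u n _
    _ = ⟪n, cross w u⟫ • n - ⟪w, n⟫ • cross u n + cross p n - ⟪n, cross w u⟫ • n := by abel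
    _ = cross w u + cross p n - ⟪n, cross w u + cross p n⟫ • n := by
      rw [← cross_eq_inner_smul_sub_of_inner_eq_zero hn hun, normal_part]

lemma hasDerivAt_cross {f g : ℝ → E3} {f' g' : E3} {s : ℝ} (hf : HasDerivAt f f' s)
    (hg : HasDerivAt g g' s) :
    HasDerivAt (fun x => cross (f x) (g x)) (cross (f s) g' + cross f' (g s)) s :=
  isBilinearMap_cross.toContinuousBilinearMap.hasDerivAt_of_bilinear (fun _ => hf) (fun _ => hg)

lemma inner_hasDerivAt_eq_zero_of_norm_eventually_eq {E : Type*} [NormedAddCommGroup E]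
    [InnerProductSpace ℝ E] {f : ℝ → E} {f' : E} {s c : ℝ} (hf : HasDerivAt f f' s)
    (hc : ∀ᶠ x in 𝓝 s, ‖f x‖ = c) : ⟪f s, f'⟫ = 0 := by
  have norm_sq_const : (fun x => ‖f x‖ ^ 2) =ᶠ[𝓝 s] fun _ => c ^ 2 :=
    hc.mono fun x hx => congrArg (· ^ 2) hx
  have two_mul_inner : 2 * ⟪f s, f'⟫ = 0 :=
    hf.norm_sq.unique ((hasDerivAt_const s (c ^ 2)).congr_of_eventuallyEq norm_sq_const)
  simpa using two_mul_inner

namespace Ruled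

variable {v₀ v₁ : ℝ → E3} {s : ℝ}

lemma cross_r_v₀ (hunit : ‖v₀ s‖ = 1) (horth : ⟪v₀ s, v₁ s⟫ = 0) :
    cross (r v₀ v₁ s) (v₀ s) = v₁ s :=
  cross_cross_self_of_inner_eq_zero hunit horth

lemma cross_strict_v₀ (hunit : ‖v₀ s‖ = 1) (horth : ⟪v₀ s, v₁ s⟫ = 0) :
    cross (strict v₀ v₁ s) (v₀ s) = v₁ s := by
  rw [strict, e, cross_sub_smul_left, cross_self_eq_zero, smul_zero, sub_zero,
    cross_r_v₀ hunit horth]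

lemma deriv_v₁_eq (hv₀ : DifferentiableAt ℝ v₀ s) (hv₁ : DifferentiableAt ℝ v₁ s)
    (hunit : ∀ᶠ x in 𝓝 s, ‖v₀ x‖ = 1) (horth : ∀ᶠ x in 𝓝 s, ⟪v₀ x, v₁ x⟫ = 0) :
    deriv v₁ s = cross (deriv (r v₀ v₁) s) (v₀ s) + cross (r v₀ v₁ s) (deriv v₀ s) := by
  have hr : DifferentiableAt ℝ (r v₀ v₁) s :=
    (hasDerivAt_cross hv₀.hasDerivAt hv₁.hasDerivAt).differentiableAt
  have moment_eq : (fun x => cross (r v₀ v₁ x) (v₀ x)) =ᶠ[𝓝 s] v₁ := by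
    filter_upwards [hunit, horth] with x hx hx' using cross_r_v₀ hx hx'
  rw [← moment_eq.deriv_eq, (hasDerivAt_cross hr.hasDerivAt hv₀.hasDerivAt).deriv, add_comm]

lemma cross_strict_n₀ (hv₀ : DifferentiableAt ℝ v₀ s) (hv₁ : DifferentiableAt ℝ v₁ s)
    (hunit : ∀ᶠ x in 𝓝 s, ‖v₀ x‖ = 1) (horth : ∀ᶠ x in 𝓝 s, ⟪v₀ x, v₁ x⟫ = 0)
    (harc : ‖deriv v₀ s‖ = 1) :
    cross (strict v₀ v₁ s) (n₀ v₀ s) = n₁ v₀ v₁ s := by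
  have v₀_orth_deriv : ⟪v₀ s, deriv v₀ s⟫ = 0 :=
    inner_hasDerivAt_eq_zero_of_norm_eventually_eq hv₀.hasDerivAt hunit
  rw [n₁, κ₁, deriv_v₁_eq hv₀ hv₁ hunit horth]
  exact cross_sub_inner_smul_left_of_inner_eq_zero harc v₀_orth_deriv _ _

lemma cross_strict_t₀ (hv : cross (strict v₀ v₁ s) (v₀ s) = v₁ s)
    (hn : cross (strict v₀ v₁ s) (n₀ v₀ s) = n₁ v₀ v₁ s) :
    cross (strict v₀ v₁ s) (t₀ v₀ s) = t₁ v₀ v₁ s := by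
  rw [t₀, t₁, cross_cross_leibniz, hv, hn, add_comm]

end Ruled

theorem striction_curve_moments_general {v₀ v₁ : ℝ → E3} {s : ℝ}
    (hv₀ : DifferentiableAt ℝ v₀ s) (hv₁ : DifferentiableAt ℝ v₁ s)
    (hunit : ∀ᶠ x in 𝓝 s, ‖v₀ x‖ = 1) (horth : ∀ᶠ x in 𝓝 s, ⟪v₀ x, v₁ x⟫ = 0)
    (harc : ‖deriv v₀ s‖ = 1) :
    cross (strict v₀ v₁ s) (v₀ s) = v₁ s ∧
    cross (strict v₀ v₁ s) (n₀ v₀ s) = n₁ v₀ v₁ s ∧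
    cross (strict v₀ v₁ s) (t₀ v₀ s) = t₁ v₀ v₁ s := by
  have hv : cross (strict v₀ v₁ s) (v₀ s) = v₁ s :=
    cross_strict_v₀ hunit.self_of_nhds horth.self_of_nhds
  have hn : cross (strict v₀ v₁ s) (n₀ v₀ s) = n₁ v₀ v₁ s :=
    cross_strict_n₀ hv₀ hv₁ hunit horth harc
  exact ⟨hv, hn, cross_strict_t₀ hv hn⟩

/-- The striction curve satisfies `σ × v₀ = v₁`, `σ × n₀ = n₁` and `σ × t₀ = t₁`;
in particular `σ(s)` lies on the lines corresponding to `v̌(s)`, `ň(s)`, `ť(s)`. -/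
theorem striction_curve_moments
    (I : Set ℝ) (v₀ v₁ : ℝ → E3)
    (hI : IsOpen I) (hI' : I.OrdConnected)
    (hv₀ : ContDiffOn ℝ (⊤ : ℕ∞) v₀ I) (hv₁ : ContDiffOn ℝ (⊤ : ℕ∞) v₁ I)
    (hunit : ∀ s ∈ I, ‖v₀ s‖ = 1) (horth : ∀ s ∈ I, ⟪v₀ s, v₁ s⟫ = 0)
    (harc : ∀ s ∈ I, ‖deriv v₀ s‖ = 1) :
    ∀ s ∈ I,
      cross (strict v₀ v₁ s) (v₀ s) = v₁ s ∧
      cross (strict v₀ v₁ s) (n₀ v₀ s) = n₁ v₀ v₁ s ∧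
      cross (strict v₀ v₁ s) (t₀ v₀ s) = t₁ v₀ v₁ s := by
  intro s hs
  have hIs : I ∈ 𝓝 s := hI.mem_nhds hs
  exact striction_curve_moments_general
    ((hv₀.contDiffAt hIs).differentiableAt (by simp))
    ((hv₁.contDiffAt hIs).differentiableAt (by simp))
    (Filter.eventually_of_mem hIs hunit) (Filter.eventually_of_mem hIs horth) (harc s hs)
end
end

section
/- Under the standing hypotheses, the map F(s,t) = r(s) + t·e(s) is singular at (s₀, t₀) — that is, the vectors (∂F/∂s)(s₀,t₀) and (∂F/∂t)(s₀,t₀) are linearly dependent — if and only if κ₁(s₀) = 0 and t₀ = −⟪r'(s₀), e'(s₀)⟫. Moreover, in that case the singular value is F(s₀, t₀) = σ(s₀), the corresponding point of the striction curve. -/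
noncomputable section
open scoped RealInnerProductSpace

open Ruled

/-!
A pair `w, a` of vectors of `ℝ³` is dependent iff `w × a = 0`. If `a` and `n` are orthogonal and
nonzero, then `a` is parallel to `n × (a × n)`, so the dependence of `w` and `a` is detected by the
two numbers `⟪w, n⟫` and `⟪w, a × n⟫`. For `a = ∂F/∂t = v₀`, `n = v₀'` and `w = ∂F/∂s` they are
`⟪r', e'⟫ + t` and `κ₁`.
-/

open scoped Topology

section InnerProductSpace

variable {V : Type*} [NormedAddCommGroup V] [InnerProductSpace ℝ V]

theorem inner_eq_zero_of_hasDerivAt_of_norm_eventually_eq {f : ℝ → V} {f' : V} {s C : ℝ}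
    (hf : HasDerivAt f f' s) (hC : ∀ᶠ u in 𝓝 s, ‖f u‖ = C) : ⟪f s, f'⟫ = 0 := by
  have hconst : (‖f ·‖ ^ 2) =ᶠ[𝓝 s] fun _ => C ^ 2 := hC.mono fun u hu => congrArg (· ^ 2) hu
  have hderiv : 2 * ⟪f s, f'⟫ = 0 :=
    hf.norm_sq.unique ((hasDerivAt_const s (C ^ 2)).congr_of_eventuallyEq hconst)
  linarith

end InnerProductSpace

namespace E3

theorem inner_eq_dotProduct (u v : E3) : ⟪u, v⟫ = u.ofLp ⬝ᵥ v.ofLp := by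
  rw [EuclideanSpace.inner_eq_star_dotProduct, star_trivial, dotProduct_comm]

theorem ofLp_cross (u v : E3) : (cross u v).ofLp = crossProduct u.ofLp v.ofLp := rfl

theorem isBilinearMap_cross : IsBilinearMap ℝ cross where
  add_left u v w := WithLp.ofLp_injective 2 (by simp [ofLp_cross])
  smul_left c u v := WithLp.ofLp_injective 2 (by simp [ofLp_cross])
  add_right u v w := WithLp.ofLp_injective 2 (by simp [ofLp_cross])
  smul_right c u v := WithLp.ofLp_injective 2 (by simp [ofLp_cross])

theorem hasDerivAt_cross {f g : ℝ → E3} {f' g' : E3} {s : ℝ} (hf : HasDerivAt f f' s)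
    (hg : HasDerivAt g g' s) :
    HasDerivAt (fun u => cross (f u) (g u)) (cross (f s) g' + cross f' (g s)) s :=
  isBilinearMap_cross.toContinuousBilinearMap.hasDerivAt_of_bilinear (fun _ => hf) fun _ => hg

theorem inner_cross_self (u v : E3) : ⟪v, cross u v⟫ = 0 := by
  rw [inner_eq_dotProduct, ofLp_cross, dot_cross_self]

theorem inner_cross_rotate (u v w : E3) : ⟪u, cross v w⟫ = ⟪w, cross u v⟫ := by
  simp only [inner_eq_dotProduct, ofLp_cross, triple_product_permutation w.ofLp]

theorem inner_cross_cross (u v w x : E3) :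
    ⟪cross u v, cross w x⟫ = ⟪u, w⟫ * ⟪v, x⟫ - ⟪u, x⟫ * ⟪v, w⟫ := by
  simp only [inner_eq_dotProduct, ofLp_cross, cross_dot_cross]

theorem cross_cross_eq_smul_sub_smul (u v w : E3) :
    cross u (cross v w) = ⟪u, w⟫ • v - ⟪u, v⟫ • w := by
  apply WithLp.ofLp_injective 2
  simp only [ofLp_cross, inner_eq_dotProduct, WithLp.ofLp_sub, WithLp.ofLp_smul,
    cross_cross_eq_smul_sub_smul', dotProduct_comm v.ofLp]

theorem not_linearIndependent_pair_iff_cross_eq_zero {u v : E3} :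
    ¬ LinearIndependent ℝ ![u, v] ↔ cross u v = 0 := by
  have hmap : WithLp.linearEquiv 2 ℝ (Fin 3 → ℝ) ∘ ![u, v] = ![u.ofLp, v.ofLp] := by
    ext i : 1
    fin_cases i <;> rfl
  rw [← (WithLp.linearEquiv 2 ℝ (Fin 3 → ℝ)).toLinearMap.linearIndependent_iff
    (LinearEquiv.ker _), LinearEquiv.coe_coe, hmap,
    ← crossProduct_ne_zero_iff_linearIndependent, not_not, ← ofLp_cross, WithLp.ofLp_eq_zero]

theorem cross_eq_zero_iff_inner_eq_zero {a n w : E3} (ha : a ≠ 0) (hn : n ≠ 0)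
    (han : ⟪a, n⟫ = 0) : cross w a = 0 ↔ ⟪w, n⟫ = 0 ∧ ⟪w, cross a n⟫ = 0 := by
  constructor
  · intro hwa
    have hmul : ⟪w, n⟫ * ⟪a, a⟫ = 0 := by
      calc ⟪w, n⟫ * ⟪a, a⟫ = ⟪cross w a, cross n a⟫ := by
            rw [inner_cross_cross, han, mul_zero, sub_zero]
        _ = 0 := by rw [hwa, inner_zero_left]
    exact ⟨(mul_eq_zero.mp hmul).resolve_right (inner_self_ne_zero.mpr ha),
      by rw [inner_cross_rotate, hwa, inner_zero_right]⟩
  · rintro ⟨hwn, hwan⟩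
    have hnan : cross n (cross a n) = ⟪n, n⟫ • a := by
      rw [cross_cross_eq_smul_sub_smul, real_inner_comm a n, han, zero_smul, sub_zero]
    have hsmul : ⟪n, n⟫ • cross w a = 0 := by
      rw [← isBilinearMap_cross.smul_right, ← hnan, cross_cross_eq_smul_sub_smul, hwn, hwan,
        zero_smul, zero_smul, sub_zero]
    exact (smul_eq_zero.mp hsmul).resolve_left (inner_self_ne_zero.mpr hn)

end E3

namespace Ruled

variable {v₀ v₁ : ℝ → E3} {s : ℝ}

theorem hasDerivAt_r (hv₀ : DifferentiableAt ℝ v₀ s) (hv₁ : DifferentiableAt ℝ v₁ s) :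
    HasDerivAt (r v₀ v₁) (cross (v₀ s) (deriv v₁ s) + cross (deriv v₀ s) (v₁ s)) s :=
  E3.hasDerivAt_cross hv₀.hasDerivAt hv₁.hasDerivAt

theorem deriv_F_left (hv₀ : DifferentiableAt ℝ v₀ s) (hv₁ : DifferentiableAt ℝ v₁ s) (c : ℝ) :
    deriv (fun u => F v₀ v₁ u c) s = deriv (r v₀ v₁) s + c • deriv v₀ s :=
  ((hasDerivAt_r hv₀ hv₁).differentiableAt.hasDerivAt.add (hv₀.hasDerivAt.const_smul c)).deriv

theorem deriv_F_right (v₀ v₁ : ℝ → E3) (s c : ℝ) : deriv (fun u => F v₀ v₁ s u) c = v₀ s := by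
  have h := ((hasDerivAt_id c).smul_const (v₀ s)).const_add (r v₀ v₁ s)
  exact h.deriv.trans (one_smul ℝ (v₀ s))

theorem inner_deriv_F_left_deriv (hv₀ : DifferentiableAt ℝ v₀ s) (hv₁ : DifferentiableAt ℝ v₁ s)
    (harc : ‖deriv v₀ s‖ = 1) (c : ℝ) :
    ⟪deriv (fun u => F v₀ v₁ u c) s, deriv v₀ s⟫ =
      ⟪deriv (r v₀ v₁) s, deriv (e v₀) s⟫ + c := by
  rw [deriv_F_left hv₀ hv₁, inner_add_left, real_inner_smul_left, real_inner_self_eq_norm_sq, harc,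
    one_pow, mul_one, e]

theorem inner_deriv_r_t₀ (hv₀ : DifferentiableAt ℝ v₀ s) (hv₁ : DifferentiableAt ℝ v₁ s)
    (hunit : ‖v₀ s‖ = 1) (horth : ⟪v₀ s, v₁ s⟫ = 0) (horth' : ⟪v₀ s, deriv v₀ s⟫ = 0) :
    ⟪deriv (r v₀ v₁) s, t₀ v₀ s⟫ = κ₁ v₀ v₁ s := by
  have hleft : ⟪cross (v₀ s) (deriv v₁ s), t₀ v₀ s⟫ = κ₁ v₀ v₁ s := by
    rw [t₀, n₀, κ₁, E3.inner_cross_cross, real_inner_self_eq_norm_sq, hunit, horth',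
      real_inner_comm, one_pow, one_mul, zero_mul, sub_zero]
  have hright : ⟪cross (deriv v₀ s) (v₁ s), t₀ v₀ s⟫ = 0 := by
    rw [t₀, n₀, E3.inner_cross_cross, real_inner_comm, horth', real_inner_comm (v₀ s) (v₁ s),
      horth, zero_mul, mul_zero, sub_zero]
  rw [(hasDerivAt_r hv₀ hv₁).deriv, inner_add_left, hleft, hright, add_zero]

theorem inner_deriv_F_left_t₀ (hv₀ : DifferentiableAt ℝ v₀ s) (hv₁ : DifferentiableAt ℝ v₁ s)
    (hunit : ‖v₀ s‖ = 1) (horth : ⟪v₀ s, v₁ s⟫ = 0) (horth' : ⟪v₀ s, deriv v₀ s⟫ = 0) (c : ℝ) :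
    ⟪deriv (fun u => F v₀ v₁ u c) s, t₀ v₀ s⟫ = κ₁ v₀ v₁ s := by
  have hn₀ : ⟪deriv v₀ s, t₀ v₀ s⟫ = 0 := E3.inner_cross_self _ _
  rw [deriv_F_left hv₀ hv₁, inner_add_left, real_inner_smul_left, hn₀, mul_zero, add_zero,
    inner_deriv_r_t₀ hv₀ hv₁ hunit horth horth']

theorem F_neg_inner_eq_strict (v₀ v₁ : ℝ → E3) (s : ℝ) :
    F v₀ v₁ s (-⟪deriv (r v₀ v₁) s, deriv (e v₀) s⟫) = strict v₀ v₁ s := by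
  rw [F, strict, neg_smul, ← sub_eq_add_neg, e]

end Ruled

theorem singular_point_characterization_general {v₀ v₁ : ℝ → E3} {s : ℝ}
    (hv₀ : DifferentiableAt ℝ v₀ s) (hv₁ : DifferentiableAt ℝ v₁ s)
    (hunit : ∀ᶠ u in 𝓝 s, ‖v₀ u‖ = 1) (horth : ⟪v₀ s, v₁ s⟫ = 0)
    (harc : ‖deriv v₀ s‖ = 1) (c : ℝ) :
    (¬ LinearIndependent ℝ
        ![deriv (fun u => F v₀ v₁ u c) s, deriv (fun u => F v₀ v₁ s u) c] ↔
      (κ₁ v₀ v₁ s = 0 ∧ c = -⟪deriv (r v₀ v₁) s, deriv (e v₀) s⟫)) ∧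
    ((κ₁ v₀ v₁ s = 0 ∧ c = -⟪deriv (r v₀ v₁) s, deriv (e v₀) s⟫) →
      F v₀ v₁ s c = strict v₀ v₁ s) := by
  have hunit_s : ‖v₀ s‖ = 1 := hunit.self_of_nhds
  have horth' : ⟪v₀ s, deriv v₀ s⟫ = 0 :=
    inner_eq_zero_of_hasDerivAt_of_norm_eventually_eq hv₀.hasDerivAt hunit
  have hv₀_ne : v₀ s ≠ 0 := norm_ne_zero_iff.mp (hunit_s ▸ one_ne_zero)
  have hderiv_ne : deriv v₀ s ≠ 0 := norm_ne_zero_iff.mp (harc ▸ one_ne_zero)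
  have hparallel (w : E3) : cross w (v₀ s) = 0 ↔ ⟪w, deriv v₀ s⟫ = 0 ∧ ⟪w, t₀ v₀ s⟫ = 0 :=
    E3.cross_eq_zero_iff_inner_eq_zero hv₀_ne hderiv_ne horth'
  refine ⟨?_, fun ⟨_, hc⟩ => hc ▸ F_neg_inner_eq_strict v₀ v₁ s⟩
  rw [deriv_F_right, E3.not_linearIndependent_pair_iff_cross_eq_zero, hparallel,
    inner_deriv_F_left_deriv hv₀ hv₁ harc, inner_deriv_F_left_t₀ hv₀ hv₁ hunit_s horth horth',
    and_comm, add_comm, add_eq_zero_iff_eq_neg]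

/-- `F` is singular at `(s₀, c)` (the partial derivatives are linearly dependent) iff
`κ₁(s₀) = 0` and `c = -⟪r'(s₀), e'(s₀)⟫`; moreover in that case the singular value is
the striction point `σ(s₀)`. -/
theorem singular_point_characterization
    (I : Set ℝ) (v₀ v₁ : ℝ → E3)
    (hI : IsOpen I) (hI' : I.OrdConnected)
    (hv₀ : ContDiffOn ℝ (⊤ : ℕ∞) v₀ I) (hv₁ : ContDiffOn ℝ (⊤ : ℕ∞) v₁ I)
    (hunit : ∀ s ∈ I, ‖v₀ s‖ = 1) (horth : ∀ s ∈ I, ⟪v₀ s, v₁ s⟫ = 0)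
    (harc : ∀ s ∈ I, ‖deriv v₀ s‖ = 1) :
    ∀ s₀ ∈ I, ∀ c : ℝ,
      (¬ LinearIndependent ℝ
          ![deriv (fun u => F v₀ v₁ u c) s₀, deriv (fun u => F v₀ v₁ s₀ u) c] ↔
        (κ₁ v₀ v₁ s₀ = 0 ∧ c = -⟪deriv (r v₀ v₁) s₀, deriv (e v₀) s₀⟫)) ∧
      ((κ₁ v₀ v₁ s₀ = 0 ∧ c = -⟪deriv (r v₀ v₁) s₀, deriv (e v₀) s₀⟫) →
        F v₀ v₁ s₀ c = strict v₀ v₁ s₀) := by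
  intro s hs c
  have hIs : I ∈ 𝓝 s := hI.mem_nhds hs
  exact singular_point_characterization_general
    ((hv₀.contDiffAt hIs).differentiableAt (by simp))
    ((hv₁.contDiffAt hIs).differentiableAt (by simp))
    (Filter.eventually_of_mem hIs hunit) (horth s hs) (harc s hs) c
end
end

section
/- For a unit dual quaternion q̌ = q₀ + ε q₁, define Θ(q̌) : Im ℍ → Im ℍ by Θ(q̌)(x) = q₀ x q̄₀ + 2 q₁ q̄₀. Then: (a) for any two unit dual quaternions p̌ = p₀ + ε p₁ and q̌ = q₀ + ε q₁, the product p̌ q̌ is a unit dual quaternion and Θ(p̌ q̌)(x) = Θ(p̌)(Θ(q̌)(x)) for every pure imaginary x; and (b) Θ(q̌) is an isometry: |Θ(q̌)(x) − Θ(q̌)(y)| = |x − y| for all pure imaginary x, y. -/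
noncomputable section

open TrivSqZeroExt

/-- The action `Θ(q̌)(x) = q₀ x q̄₀ + 2 q₁ q̄₀` of a unit dual quaternion `q̌ = q₀ + ε q₁`
on pure imaginary quaternions. -/
def Theta (q₀ q₁ x : Quaternion ℝ) : Quaternion ℝ :=
  q₀ * x * star q₀ + 2 * (q₁ * star q₀)

section StarRing

variable {R : Type*} [Semiring R] [StarRing R]

/-- Unit dual numbers `w = a + ε b` over a star ring, as a generalization of unit dual quaternions:
`w` is unitary for the conjugation `a + ε b ↦ star a + ε star b`. The condition on `a` is two-sided
because `a * star a = 1` does not imply `star a * a = 1` in an arbitrary star ring. -/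
structure IsUnitDual (w : DualNumber R) : Prop where
  fst_mem_unitary : w.fst ∈ unitary R
  fst_mul_star_snd_add : w.fst * star w.snd + w.snd * star w.fst = 0

/-- The affine map `x ↦ a x a* + 2 b a*` attached to a dual number `a + ε b` over a star ring; it
generalizes `Theta` and takes the dual number as a single argument. -/
def dualAction (w : DualNumber R) (x : R) : R :=
  w.fst * x * star w.fst + 2 * (w.snd * star w.fst)

theorem isUnitDual_inl_add_inr [IsDedekindFiniteMonoid R] {a b : R} (ha : a * star a = 1)
    (hab : a * star b + b * star a = 0) : IsUnitDual (inl a + inr b : DualNumber R) where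
  fst_mem_unitary := by
    have ha_unitary : a ∈ unitary R := ⟨mul_eq_one_symm ha, ha⟩
    simpa using ha_unitary
  fst_mul_star_snd_add := by simpa using hab

theorem IsUnitDual.mul {p q : DualNumber R} (hp : IsUnitDual p) (hq : IsUnitDual q) :
    IsUnitDual (p * q) where
  fst_mem_unitary := by
    simpa only [fst_mul] using mul_mem hp.fst_mem_unitary hq.fst_mem_unitary
  fst_mul_star_snd_add := by
    calc (p * q).fst * star (p * q).snd + (p * q).snd * star (p * q).fst
        = p.fst * (q.fst * star q.snd + q.snd * star q.fst) * star p.fst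
            + (p.fst * (q.fst * star q.fst) * star p.snd
              + p.snd * (q.fst * star q.fst) * star p.fst) := by
          simp only [fst_mul, DualNumber.snd_mul, star_add, star_mul, mul_add, add_mul, mul_assoc]
          abel
      _ = 0 := by
          rw [hq.fst_mul_star_snd_add, hq.fst_mem_unitary.2, mul_zero, zero_mul, zero_add,
            mul_one, mul_one, hp.fst_mul_star_snd_add]

theorem dualAction_mul (p : DualNumber R) {q : DualNumber R} (hq : q.fst * star q.fst = 1) (x : R) :
    dualAction (p * q) x = dualAction p (dualAction q x) := by
  calc dualAction (p * q) x
      = p.fst * dualAction q x * star p.fst + 2 * (p.snd * (q.fst * star q.fst) * star p.fst) := by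
        simp only [dualAction, fst_mul, DualNumber.snd_mul, star_mul, two_mul, mul_add, add_mul,
          mul_assoc]
        abel
    _ = dualAction p (dualAction q x) := by rw [hq, mul_one, dualAction.eq_def p]

end StarRing

section CStarRing

variable {R : Type*} [NormedRing R] [StarRing R] [CStarRing R]

theorem isometry_dualAction {w : DualNumber R} (hw : w.fst ∈ unitary R) :
    Isometry (dualAction w) := by
  refine Isometry.of_dist_eq fun x y => ?_
  calc dist (dualAction w x) (dualAction w y)
      = ‖w.fst * (x - y) * star w.fst‖ := by
        simp only [dualAction, dist_eq_norm, add_sub_add_right_eq_sub, mul_sub, sub_mul]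
    _ = ‖x - y‖ := by
        rw [CStarRing.norm_mul_mem_unitary _ (Unitary.star_mem hw),
          CStarRing.norm_mem_unitary_mul _ hw]
    _ = dist x y := (dist_eq_norm x y).symm

theorem unit_dual_quaternion_group_action_isometry_general {p q : DualNumber R}
    (hp : IsUnitDual p) (hq : IsUnitDual q) :
    IsUnitDual (p * q) ∧ (∀ x, dualAction (p * q) x = dualAction p (dualAction q x)) ∧
      Isometry (dualAction q) :=
  ⟨hp.mul hq, dualAction_mul p hq.fst_mem_unitary.2, isometry_dualAction hq.fst_mem_unitary⟩

end CStarRing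

theorem theta_eq_dualAction (q₀ q₁ : Quaternion ℝ) :
    Theta q₀ q₁ = dualAction (inl q₀ + inr q₁) := by
  ext1 x
  simp [Theta, dualAction]

/-- (a) The product of two unit dual quaternions is a unit dual quaternion and
`Θ(p̌ q̌) = Θ(p̌) ∘ Θ(q̌)` on pure imaginary quaternions; (b) `Θ(q̌)` is an isometry. -/
theorem unit_dual_quaternion_group_action_isometry (p₀ p₁ q₀ q₁ : Quaternion ℝ)
    (hp : p₀ * star p₀ = 1) (hp' : p₀ * star p₁ + p₁ * star p₀ = 0)
    (hq : q₀ * star q₀ = 1) (hq' : q₀ * star q₁ + q₁ * star q₀ = 0) :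
    (∀ w : DualNumber (Quaternion ℝ),
        w = (inl p₀ + inr p₁ : DualNumber (Quaternion ℝ)) * (inl q₀ + inr q₁) →
          w.fst * star w.fst = 1 ∧
          w.fst * star w.snd + w.snd * star w.fst = 0 ∧
          ∀ x : Quaternion ℝ, x.re = 0 →
            Theta w.fst w.snd x = Theta p₀ p₁ (Theta q₀ q₁ x)) ∧
      (∀ x y : Quaternion ℝ, x.re = 0 → y.re = 0 →
        ‖Theta q₀ q₁ x - Theta q₀ q₁ y‖ = ‖x - y‖) := by
  obtain ⟨hpq, action_mul, isometry_action⟩ := unit_dual_quaternion_group_action_isometry_general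
    (isUnitDual_inl_add_inr hp hp') (isUnitDual_inl_add_inr hq hq')
  simp only [theta_eq_dualAction, inl_fst_add_inr_snd_eq, ← dist_eq_norm]
  refine ⟨?_, fun x y _ _ => isometry_action.dist_eq x y⟩
  rintro w rfl
  exact ⟨hpq.fst_mem_unitary.2, hpq.fst_mul_star_snd_add, fun x _ => action_mul x⟩
end
end
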